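/- (Gromov–Milman isoperimetric inequality.) Let X = (ℝ^{n+1}, ‖·‖) be a normed space with nondecreasing modulus of convexity δ, extended by δ(t) = 0 for t < 0. Set θ_n = 1 − (1/2)^{1/(n−1)} and a(ε) = δ(ε/8 − θ_n). Then for every Borel set A ⊆ S(X) with μ(A) ≥ 1/2 and every ε > 0, μ(A + ε) ≥ 1 − e^{−a(ε)·n}. -/

import Mathlib

open MeasureTheory Set

/-- The unit sphere of the norm `N` on `ℝ^{n+1}`. -/
def unitSphere {n : ℕ} (N : (Fin (n + 1) → ℝ) → ℝ) : Set (Fin (n + 1) → ℝ) :=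
  {x | N x = 1}

/-- The cone `{t • a : a ∈ A, 0 ≤ t ≤ 1}` over a subset `A` of the unit sphere. -/
def coneOf {n : ℕ} (A : Set (Fin (n + 1) → ℝ)) : Set (Fin (n + 1) → ℝ) :=
  {p | ∃ a ∈ A, ∃ t : ℝ, 0 ≤ t ∧ t ≤ 1 ∧ p = t • a}

/-- The conical probability measure of a subset `A` of the unit sphere of the norm `N`. -/
noncomputable def conicalMeasure {n : ℕ} (N : (Fin (n + 1) → ℝ) → ℝ)
    (A : Set (Fin (n + 1) → ℝ)) : ENNReal :=
  volume (coneOf A) / volume {x | N x ≤ 1}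

/-- The (closed) `ε`-neighborhood of `Y` inside the unit sphere of the norm `N`,
for the distance `d(x,y) = N (x - y)`. -/
noncomputable def sphNbhd {n : ℕ} (N : (Fin (n + 1) → ℝ) → ℝ)
    (Y : Set (Fin (n + 1) → ℝ)) (ε : ℝ) : Set (Fin (n + 1) → ℝ) :=
  {x | N x = 1 ∧ sInf ((fun y => N (x - y)) '' Y) ≤ ε}

/-- `θ_n = 1 - (1/2)^{1/(n-1)}`. -/
noncomputable def thetaGM (n : ℕ) : ℝ := 1 - (1 / 2 : ℝ) ^ ((1 : ℝ) / ((n : ℝ) - 1))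

open Metric
open scoped ENNReal Pointwise

/-!
Let `B` be the set of points of the sphere at distance more than `ε` from `A`. Uniform convexity
puts the midpoints of `A` and `B` in the ball of radius `1 - δ(ε)`, hence the midpoints of the cones
over `A` and `B` in the ball of radius `r = max (1 - δ(ε)) (1 / 2)`. In dimension `d = n + 1` the
Brunn–Minkowski inequality then gives `μ(A) μ(B) ≤ r ^ (2 d)`. If `δ(ε) ≤ 1 / 2`, it follows from
`μ(B) ≤ μ(A)` that `μ(B) ≤ (1 - δ(ε)) ^ d ≤ exp (-δ(ε) d)`; otherwise `μ(A) ≥ 1 / 2` gives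
`μ(B) ≤ 2 / 4 ^ d ≤ exp (-d)`, and `δ(ε) ≤ 1`. Brunn–Minkowski is the case of indicator functions of
the Prékopa–Leindler inequality, which passes to product measures and thus reduces to the real
line. Finally `a(ε) ≤ δ(ε)`, because `θ_n ≥ 0` and `δ` is nondecreasing.
-/

section BrunnMinkowskiReal

lemma volume_add_volume_le_of_isCompact {K L S : Set ℝ} (hK : IsCompact K) (hL : IsCompact L)
    (hK₀ : K.Nonempty) (hL₀ : L.Nonempty) (h : ∀ x ∈ K, ∀ y ∈ L, midpoint ℝ x y ∈ S) :
    volume K + volume L ≤ 2 * volume S := by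
  -- The translates of `K` and `L` by `min L` and `max K` lie in `K + L` and meet in one point.
  obtain ⟨a, haK, ha⟩ := hK.exists_isGreatest hK₀
  obtain ⟨b, hbL, hb⟩ := hL.exists_isLeast hL₀
  have union_subset : (· + b) '' K ∪ (a + ·) '' L ⊆ (2 : ℝ) • S := by
    rintro _ (⟨x, hx, rfl⟩ | ⟨y, hy, rfl⟩)
    · exact ⟨_, h x hx b hbL, by simp [midpoint_eq_smul_add]⟩
    · exact ⟨_, h a haK y hy, by simp [midpoint_eq_smul_add]⟩
  have inter_subset : (· + b) '' K ∩ (a + ·) '' L ⊆ {a + b} := by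
    rintro _ ⟨⟨x, hx, rfl⟩, y, hy, hxy⟩
    have : x ≤ a := ha hx
    have : b ≤ y := hb hy
    simp only [mem_singleton_iff] at hxy ⊢
    linarith
  have measurableSet_image : MeasurableSet ((a + ·) '' L) :=
    (hL.image (by fun_prop)).measurableSet
  calc volume K + volume L
      = volume ((· + b) '' K) + volume ((a + ·) '' L) := by simp
    _ = volume ((· + b) '' K ∪ (a + ·) '' L) :=
      (measure_union₀ measurableSet_image.nullMeasurableSet
        (measure_mono_null inter_subset (by simp))).symm
    _ ≤ volume ((2 : ℝ) • S) := measure_mono union_subset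
    _ = 2 * volume S := by simp [Measure.addHaar_smul]

lemma measure_eq_iSup_isCompact_nonempty {α : Type*} [TopologicalSpace α] [MeasurableSpace α]
    (μ : Measure α) [μ.InnerRegular] {s : Set α} (hs : MeasurableSet s) :
    μ s = ⨆ (K : Set α) (_ : K ⊆ s ∧ IsCompact K ∧ K.Nonempty), μ K := by
  refine le_antisymm ?_ (iSup₂_le fun K hK => measure_mono hK.1)
  rw [hs.measure_eq_iSup_isCompact]
  refine iSup_le fun K => iSup₂_le fun hKs hK => ?_
  rcases K.eq_empty_or_nonempty with rfl | hK₀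
  · simp
  · exact le_iSup₂_of_le K ⟨hKs, hK, hK₀⟩ le_rfl

lemma volume_add_volume_le_of_midpoint_mem {A B S : Set ℝ} (hA : MeasurableSet A)
    (hB : MeasurableSet B) (hA₀ : A.Nonempty) (hB₀ : B.Nonempty)
    (h : ∀ x ∈ A, ∀ y ∈ B, midpoint ℝ x y ∈ S) :
    volume A + volume B ≤ 2 * volume S := by
  have exists_isCompact : ∀ {C : Set ℝ}, C.Nonempty → ∃ K ⊆ C, IsCompact K ∧ K.Nonempty :=
    fun ⟨c, hc⟩ => ⟨{c}, singleton_subset_iff.2 hc, isCompact_singleton, singleton_nonempty c⟩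
  rw [measure_eq_iSup_isCompact_nonempty volume hA, measure_eq_iSup_isCompact_nonempty volume hB]
  exact ENNReal.biSup_add_biSup_le' (exists_isCompact hA₀) (exists_isCompact hB₀)
    fun K ⟨hKA, hK, hK₀⟩ L ⟨hLB, hL, hL₀⟩ => volume_add_volume_le_of_isCompact hK hL hK₀ hL₀
      fun x hx y hy => h x (hKA hx) y (hLB hy)

end BrunnMinkowskiReal

section PrekopaLeindler

/-- The **Prékopa–Leindler inequality** for the measure `μ`, in the midpoint case: if
`√(f x * g y) ≤ h ((x + y) / 2)` for all `x` and `y`, then `√(∫ f * ∫ g) ≤ ∫ h`. Both sides are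
squared to avoid roots in `ℝ≥0∞`. -/
def PrekopaLeindler {E : Type*} [AddCommGroup E] [Module ℝ E] [MeasurableSpace E]
    (μ : Measure E) : Prop :=
  ∀ ⦃f g h : E → ℝ≥0∞⦄, Measurable f → Measurable g → Measurable h →
    (∀ x y, f x * g y ≤ h (midpoint ℝ x y) ^ 2) →
    (∫⁻ x, f x ∂μ) * (∫⁻ x, g x ∂μ) ≤ (∫⁻ x, h x ∂μ) ^ 2

lemma lintegral_eq_lintegral_measure_ofReal_lt {α : Type*} [MeasurableSpace α] (μ : Measure α)
    {f : α → ℝ≥0∞} (hf : Measurable f) (hf_top : ∀ x, f x ≠ ∞) :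
    ∫⁻ x, f x ∂μ = ∫⁻ t in Ioi (0 : ℝ), μ {x | ENNReal.ofReal t < f x} := by
  have layercake := lintegral_eq_lintegral_meas_lt μ (f := fun x => (f x).toReal)
    (.of_forall fun _ => ENNReal.toReal_nonneg) hf.ennreal_toReal.aemeasurable
  simp only [ENNReal.ofReal_toReal (hf_top _)] at layercake
  refine layercake.trans (setLIntegral_congr_fun measurableSet_Ioi fun t ht => ?_)
  simp only [ENNReal.ofReal_lt_iff_lt_toReal (le_of_lt ht) (hf_top _)]

lemma lintegral_eq_iSup_lintegral_min_natCast {α : Type*} [MeasurableSpace α] (μ : Measure α)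
    {f : α → ℝ≥0∞} (hf : Measurable f) :
    ∫⁻ x, f x ∂μ = ⨆ k : ℕ, ∫⁻ x, min (f x) k ∂μ := by
  rw [← lintegral_iSup (fun k => hf.min measurable_const)
    fun k l hkl x => min_le_min_left _ (by exact_mod_cast hkl)]
  refine lintegral_congr fun x => ?_
  rw [← inf_iSup_eq, ENNReal.iSup_natCast, inf_top_eq]

lemma ennreal_mul_le_sq_of_add_le_two_mul {a b c : ℝ≥0∞} (h : a + b ≤ 2 * c) : a * b ≤ c ^ 2 := by
  rcases eq_or_ne c ∞ with rfl | hc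
  · simp
  have hab : a + b ≠ ∞ := ne_top_of_le_ne_top (ENNReal.mul_ne_top ENNReal.ofNat_ne_top hc) h
  lift a to NNReal using (ENNReal.add_ne_top.1 hab).1
  lift b to NNReal using (ENNReal.add_ne_top.1 hab).2
  lift c to NNReal using hc
  norm_cast at h ⊢
  rw [← NNReal.coe_le_coe] at h ⊢
  push_cast at h ⊢
  nlinarith [sq_nonneg (a - b : ℝ), a.coe_nonneg, b.coe_nonneg]

lemma ennreal_exists_sq_eq (a : ℝ≥0∞) : ∃ c : ℝ≥0∞, c ^ 2 = a :=
  ⟨a ^ (2⁻¹ : ℝ), by rw [← ENNReal.rpow_natCast, ← ENNReal.rpow_mul]; simp⟩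

lemma volume_lt_add_volume_lt_le {f g h : ℝ → ℝ≥0∞} {c : ℝ≥0∞} (hf : Measurable f)
    (hg : Measurable g) (hfgh : ∀ x y, f x * g y ≤ h (midpoint ℝ x y) ^ 2)
    (hcf : c < ⨆ x, f x) (hcg : c < ⨆ x, g x) :
    volume {x | c < f x} + volume {x | c < g x} ≤ 2 * volume {x | c < h x} := by
  refine volume_add_volume_le_of_midpoint_mem (measurableSet_lt measurable_const hf)
    (measurableSet_lt measurable_const hg) (lt_iSup_iff.1 hcf) (lt_iSup_iff.1 hcg)
    fun x hx y hy => (?_ : c < h (midpoint ℝ x y))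
  refine lt_of_pow_lt_pow_left' 2 ?_
  calc c ^ 2 = c * c := sq c
    _ < f x * g y := ENNReal.mul_lt_mul hx hy
    _ ≤ h (midpoint ℝ x y) ^ 2 := hfgh x y

lemma lintegral_add_lintegral_le_of_iSup_eq_one {f g h : ℝ → ℝ≥0∞} (hf : Measurable f)
    (hg : Measurable g) (hh : Measurable h)
    (hfgh : ∀ x y, f x * g y ≤ h (midpoint ℝ x y) ^ 2)
    (hf_sup : ⨆ x, f x = 1) (hg_sup : ⨆ x, g x = 1) :
    (∫⁻ x, f x) + (∫⁻ x, g x) ≤ 2 * ∫⁻ x, h x := by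
  have hf_le x : f x ≤ 1 := hf_sup ▸ le_iSup f x
  have hg_le x : g x ≤ 1 := hg_sup ▸ le_iSup g x
  have superlevel_antitone : Antitone fun t : ℝ => volume {x | ENNReal.ofReal t < f x} :=
    fun s t hst => measure_mono fun x hx => (ENNReal.ofReal_le_ofReal hst).trans_lt hx
  calc (∫⁻ x, f x) + (∫⁻ x, g x)
      = ∫⁻ t in Ioi (0 : ℝ), (volume {x | ENNReal.ofReal t < f x} +
          volume {x | ENNReal.ofReal t < g x}) := by
        rw [lintegral_add_left superlevel_antitone.measurable,
          lintegral_eq_lintegral_measure_ofReal_lt _ hf fun x =>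
            ne_top_of_le_ne_top ENNReal.one_ne_top (hf_le x),
          lintegral_eq_lintegral_measure_ofReal_lt _ hg fun x =>
            ne_top_of_le_ne_top ENNReal.one_ne_top (hg_le x)]
    _ ≤ ∫⁻ t in Ioi (0 : ℝ), 2 * volume {x | ENNReal.ofReal t < min (h x) 1} := by
        refine lintegral_mono fun t => ?_
        rcases lt_or_ge (ENNReal.ofReal t) 1 with ht | ht
        · simpa only [lt_min_iff, ht, and_true] using
            volume_lt_add_volume_lt_le hf hg hfgh (hf_sup ▸ ht) (hg_sup ▸ ht)
        · simp [((hf_le _).trans ht).not_gt, ((hg_le _).trans ht).not_gt]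
    _ = 2 * ∫⁻ x, min (h x) 1 := by
        rw [lintegral_const_mul' _ _ ENNReal.ofNat_ne_top,
          lintegral_eq_lintegral_measure_ofReal_lt _ (hh.min measurable_const) fun x =>
            ne_top_of_le_ne_top ENNReal.one_ne_top (min_le_right _ _)]
    _ ≤ 2 * ∫⁻ x, h x := by
        gcongr
        exact min_le_left _ _

lemma lintegral_mul_lintegral_le_sq_of_iSup_ne_top {f g h : ℝ → ℝ≥0∞} (hf : Measurable f)
    (hg : Measurable g) (hh : Measurable h)
    (hfgh : ∀ x y, f x * g y ≤ h (midpoint ℝ x y) ^ 2)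
    (hf_sup : ⨆ x, f x ≠ ∞) (hg_sup : ⨆ x, g x ≠ ∞) :
    (∫⁻ x, f x) * (∫⁻ x, g x) ≤ (∫⁻ x, h x) ^ 2 := by
  set F := ⨆ x, f x with hF
  set G := ⨆ x, g x with hG
  rcases eq_or_ne F 0 with hF₀ | hF₀
  · have : ∀ x, f x = 0 := by simpa [hF] using hF₀
    simp [this]
  rcases eq_or_ne G 0 with hG₀ | hG₀
  · have : ∀ x, g x = 0 := by simpa [hG] using hG₀
    simp [this]
  have hFG : F⁻¹ * G⁻¹ = (F * G)⁻¹ := (ENNReal.mul_inv (.inl hF₀) (.inl hf_sup)).symm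
  obtain ⟨c, hc⟩ := ennreal_exists_sq_eq (F * G)⁻¹
  have normalized := lintegral_add_lintegral_le_of_iSup_eq_one
    (f := fun x => F⁻¹ * f x) (g := fun x => G⁻¹ * g x) (h := fun x => c * h x)
    (hf.const_mul _) (hg.const_mul _) (hh.const_mul _)
    (fun x y => by
      rw [mul_pow, hc, ← hFG, mul_mul_mul_comm]
      gcongr
      exact hfgh x y)
    (by rw [← ENNReal.mul_iSup, ENNReal.inv_mul_cancel hF₀ hf_sup])
    (by rw [← ENNReal.mul_iSup, ENNReal.inv_mul_cancel hG₀ hg_sup])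
  rw [lintegral_const_mul _ hf, lintegral_const_mul _ hg, lintegral_const_mul _ hh] at normalized
  have scaled := ennreal_mul_le_sq_of_add_le_two_mul normalized
  rw [mul_mul_mul_comm, hFG, mul_pow, hc] at scaled
  exact (ENNReal.mul_le_mul_iff_right (ENNReal.inv_ne_zero.2 (ENNReal.mul_ne_top hf_sup hg_sup))
    (ENNReal.inv_ne_top.2 (mul_ne_zero hF₀ hG₀))).1 scaled

lemma prekopaLeindler_volume_real : PrekopaLeindler (volume : Measure ℝ) := by
  intro f g h hf hg hh hfgh
  rw [lintegral_eq_iSup_lintegral_min_natCast _ hf, lintegral_eq_iSup_lintegral_min_natCast _ hg]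
  have iSup_min_ne_top (u : ℝ → ℝ≥0∞) (k : ℕ) : ⨆ x, min (u x) k ≠ ∞ :=
    ne_top_of_le_ne_top (ENNReal.natCast_ne_top k) (iSup_le fun _ => min_le_right _ _)
  simp only [ENNReal.iSup_mul, ENNReal.mul_iSup]
  refine iSup₂_le fun l k => ?_
  exact lintegral_mul_lintegral_le_sq_of_iSup_ne_top (hf.min measurable_const)
    (hg.min measurable_const) hh
    (fun x y => (mul_le_mul' (min_le_left _ _) (min_le_left _ _)).trans (hfgh x y))
    (iSup_min_ne_top f k) (iSup_min_ne_top g l)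

variable {E F : Type*} [AddCommGroup E] [Module ℝ E] [MeasurableSpace E]
  [AddCommGroup F] [Module ℝ F] [MeasurableSpace F]

lemma prekopaLeindler_dirac (a : E) : PrekopaLeindler (Measure.dirac a) := by
  intro f g h hf hg hh hfgh
  simpa [lintegral_dirac', hf, hg, hh] using hfgh a a

namespace PrekopaLeindler

lemma prod {μ : Measure E} {ν : Measure F} [SFinite ν] (hμ : PrekopaLeindler μ)
    (hν : PrekopaLeindler ν) : PrekopaLeindler (μ.prod ν) := by
  intro f g h hf hg hh hfgh
  rw [lintegral_prod _ hf.aemeasurable, lintegral_prod _ hg.aemeasurable,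
    lintegral_prod _ hh.aemeasurable]
  refine hμ hf.lintegral_prod_right' hg.lintegral_prod_right' hh.lintegral_prod_right'
    fun x y => ?_
  exact hν (hf.comp measurable_prodMk_left) (hg.comp measurable_prodMk_left)
    (hh.comp measurable_prodMk_left) fun z w => hfgh (x, z) (y, w)

lemma map {μ : Measure E} (hμ : PrekopaLeindler μ) (φ : E →ᵃ[ℝ] F) (hφ : Measurable φ) :
    PrekopaLeindler (μ.map φ) := by
  intro f g h hf hg hh hfgh
  rw [lintegral_map hf hφ, lintegral_map hg hφ, lintegral_map hh hφ]
  refine hμ (hf.comp hφ) (hg.comp hφ) (hh.comp hφ) fun x y => ?_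
  rw [φ.map_midpoint]
  exact hfgh (φ x) (φ y)

lemma smul {μ : Measure E} (hμ : PrekopaLeindler μ) (c : ℝ≥0∞) : PrekopaLeindler (c • μ) := by
  intro f g h hf hg hh hfgh
  simp only [lintegral_smul_measure, smul_eq_mul]
  rw [mul_mul_mul_comm, mul_pow, sq c]
  gcongr
  exact hμ hf hg hh hfgh

lemma pi {n : ℕ} {E : Fin n → Type*} [∀ i, AddCommGroup (E i)] [∀ i, Module ℝ (E i)]
    [∀ i, MeasurableSpace (E i)] {μ : ∀ i, Measure (E i)} [∀ i, SigmaFinite (μ i)]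
    (hμ : ∀ i, PrekopaLeindler (μ i)) : PrekopaLeindler (Measure.pi μ) := by
  induction n with
  | zero =>
    rw [Measure.pi_of_empty]
    exact prekopaLeindler_dirac _
  | succ n ih =>
    have coe_cons : ⇑(Fin.consLinearEquiv ℝ E).toLinearMap.toAffineMap =
        (MeasurableEquiv.piFinSuccAbove E 0).symm := by
      ext x i
      cases i using Fin.cases <;> rfl
    have := ((hμ 0).prod (ih fun i => hμ i.succ)).map
      (Fin.consLinearEquiv ℝ E).toLinearMap.toAffineMap
      (coe_cons ▸ (MeasurableEquiv.piFinSuccAbove E 0).symm.measurable)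
    rw [coe_cons] at this
    exact (measurePreserving_piFinSuccAbove μ 0).symm.map_eq ▸ this

end PrekopaLeindler

lemma prekopaLeindler_addHaar {E : Type*} [AddCommGroup E] [Module ℝ E] [TopologicalSpace E]
    [IsTopologicalAddGroup E] [ContinuousSMul ℝ E] [T2Space E] [FiniteDimensional ℝ E]
    [MeasurableSpace E] [BorelSpace E] (μ : Measure E) [μ.IsAddHaarMeasure] :
    PrekopaLeindler μ := by
  let e : (Fin (Module.finrank ℝ E) → ℝ) ≃L[ℝ] E :=
    ContinuousLinearEquiv.ofFinrankEq (by simp)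
  have := e.symm.toHomeomorph.secondCountableTopology
  have := e.toHomeomorph.symm.isClosedEmbedding.locallyCompactSpace
  have hvol : PrekopaLeindler (volume : Measure (Fin (Module.finrank ℝ E) → ℝ)) :=
    PrekopaLeindler.pi fun _ => prekopaLeindler_volume_real
  rw [Measure.isAddLeftInvariant_eq_smul μ (volume.map e)]
  exact (hvol.map e.toLinearMap.toAffineMap e.continuous.measurable).smul _

lemma measure_mul_measure_le_sq_of_midpoint_mem {μ : Measure E} (hμ : PrekopaLeindler μ)
    {A B S : Set E} (hA : MeasurableSet A) (hB : MeasurableSet B) (hS : MeasurableSet S)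
    (h : ∀ x ∈ A, ∀ y ∈ B, midpoint ℝ x y ∈ S) :
    μ A * μ B ≤ μ S ^ 2 := by
  have := hμ (measurable_one.indicator hA) (measurable_one.indicator hB)
    (measurable_one.indicator hS) fun x y => by
      by_cases hx : x ∈ A <;> by_cases hy : y ∈ B <;>
        simp_all [indicator_of_mem, indicator_of_notMem]
  simpa [lintegral_indicator_one, hA, hB, hS] using this

end PrekopaLeindler

section RealInequalities

lemma two_mul_exp_le_four_pow {d : ℕ} (hd : 2 ≤ d) : 2 * Real.exp d ≤ 4 ^ d := by
  rw [← mul_one (d : ℝ), Real.exp_nat_mul]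
  induction d, hd using Nat.le_induction with
  | base => nlinarith [Real.exp_one_lt_d9, Real.exp_pos 1]
  | succ d _ ih =>
    calc 2 * Real.exp 1 ^ (d + 1) = 2 * Real.exp 1 ^ d * Real.exp 1 := by ring
      _ ≤ 4 ^ d * 4 := by
        gcongr
        linarith [Real.exp_one_lt_d9]
      _ = 4 ^ (d + 1) := (pow_succ 4 d).symm

lemma le_exp_neg_mul_of_mul_le {a b D : ℝ} {d : ℕ} (hd : 2 ≤ d) (ha : 1 / 2 ≤ a) (hb : 0 ≤ b)
    (hba : b ≤ a) (hD : D ≤ 1) (h : a * b ≤ (max (1 - D) (1 / 2) ^ d) ^ 2) :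
    b ≤ Real.exp (-D * d) := by
  rcases le_total D (1 / 2) with hD_half | hD_half
  · rw [max_eq_left (by linarith)] at h
    have hb_sq : b ^ 2 ≤ ((1 - D) ^ d) ^ 2 := by nlinarith
    calc b ≤ (1 - D) ^ d := le_of_sq_le_sq hb_sq (pow_nonneg (by linarith) d)
      _ ≤ Real.exp (-D) ^ d := pow_le_pow_left₀ (by linarith) (Real.one_sub_le_exp_neg D) d
      _ = Real.exp (-D * d) := by rw [← Real.exp_nat_mul, mul_comm]
  · rw [max_eq_right (by linarith), pow_right_comm] at h
    have hb_mul : b * 4 ^ d ≤ 2 := by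
      calc b * 4 ^ d ≤ 2 * (a * b) * 4 ^ d := by gcongr; nlinarith
        _ ≤ 2 * ((1 / 2) ^ 2) ^ d * 4 ^ d := by gcongr
        _ = 2 := by rw [mul_assoc, ← mul_pow]; norm_num
    have hb_exp : b * Real.exp d ≤ 1 := by nlinarith [two_mul_exp_le_four_pow hd]
    calc b ≤ Real.exp (-d) := by rwa [Real.exp_neg, ← one_div, le_div_iff₀ (Real.exp_pos _)]
      _ ≤ Real.exp (-D * d) := by
        gcongr
        nlinarith [d.cast_nonneg (α := ℝ)]

end RealInequalities

section ConicalProbability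

variable {E : Type*} [NormedAddCommGroup E] [NormedSpace ℝ E]

lemma norm_midpoint_smul_smul_le {a b : E} {s t r : ℝ} (ha : ‖a‖ ≤ 1) (hb : ‖b‖ ≤ 1)
    (hab : ‖midpoint ℝ a b‖ ≤ r) (hr : 1 / 2 ≤ r) (hs : s ∈ Icc (0 : ℝ) 1)
    (ht : t ∈ Icc (0 : ℝ) 1) : ‖midpoint ℝ (s • a) (t • b)‖ ≤ r := by
  wlog hst : s ≤ t generalizing a b s t
  · rw [midpoint_comm]
    exact this hb ha (by rwa [midpoint_comm]) ht hs (le_of_not_ge hst)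
  have split : midpoint ℝ (s • a) (t • b) = s • midpoint ℝ a b + ((t - s) / 2) • b := by
    simp only [midpoint_eq_smul_add, invOf_eq_inv]
    module
  calc ‖midpoint ℝ (s • a) (t • b)‖
      ≤ s * ‖midpoint ℝ a b‖ + (t - s) / 2 * ‖b‖ := by
        rw [split]
        refine (norm_add_le _ _).trans_eq ?_
        rw [norm_smul, norm_smul, Real.norm_of_nonneg hs.1, Real.norm_of_nonneg (by linarith)]
    _ ≤ s * r + (t - s) / 2 * 1 := by
        gcongr
        exact hs.1
    _ ≤ r := by nlinarith [hs.1, ht.2]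

variable [MeasurableSpace E]

/-- The **conical probability measure** on the unit sphere of `E`: the measure of a set is the
proportion of the unit ball filled by the cone over it. It is encoded as the normalization of
Mathlib's polar-coordinates measure `μ.toSphere`, which does not depend on the scaling of `μ`. -/
noncomputable def conicalProbability (μ : Measure E) : Measure (sphere (0 : E) 1) :=
  (μ.toSphere univ)⁻¹ • μ.toSphere

variable [BorelSpace E]

lemma measurableSet_Ioo_smul_image_val {s : Set (sphere (0 : E) 1)} (hs : MeasurableSet s)
    (r : Ioi (0 : ℝ)) : MeasurableSet (Ioo (0 : ℝ) r • ((↑) '' s : Set E)) := by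
  have polar : Ioo (0 : ℝ) r • ((↑) '' s : Set E) =
      (↑) '' (homeomorphUnitSphereProd E ⁻¹' s ×ˢ Iio r) := by
    rw [← image2_smul, image2_image_right, ← Homeomorph.image_symm, image_image,
      ← image_subtype_val_Ioi_Iio, image2_image_left, image2_swap, ← image_prod]
    rfl
  rw [polar]
  exact (measurableSet_singleton 0).compl.subtype_image
    ((homeomorphUnitSphereProd E).measurable (hs.prod measurableSet_Iio))

variable [FiniteDimensional ℝ E] [Nontrivial E] (μ : Measure E) [μ.IsAddHaarMeasure]

instance : IsProbabilityMeasure (conicalProbability μ) :=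
  have : NeZero μ.toSphere := ⟨μ.toSphere_ne_zero⟩
  isProbabilityMeasureSMul

lemma conicalProbability_apply {s : Set (sphere (0 : E) 1)} (hs : MeasurableSet s) :
    conicalProbability μ s = μ (Ioo (0 : ℝ) 1 • ((↑) '' s : Set E)) / μ (ball 0 1) := by
  rw [conicalProbability, Measure.smul_apply, smul_eq_mul, mul_comm, ← div_eq_mul_inv,
    μ.toSphere_apply' hs, μ.toSphere_apply_univ]
  exact ENNReal.mul_div_mul_left _ _ (by simp [Module.finrank_pos.ne']) (by simp)

lemma conicalProbability_apply_eq_Icc {s : Set (sphere (0 : E) 1)} (hs : MeasurableSet s) :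
    conicalProbability μ s = μ (Icc (0 : ℝ) 1 • ((↑) '' s : Set E)) / μ (closedBall 0 1) := by
  have subset_union : Icc (0 : ℝ) 1 • ((↑) '' s : Set E) ⊆
      Ioo (0 : ℝ) 1 • ((↑) '' s : Set E) ∪ ({0} ∪ sphere 0 1) := by
    rintro _ ⟨t, ht, _, ⟨x, hx, rfl⟩, rfl⟩
    rcases eq_endpoints_or_mem_Ioo_of_mem_Icc ht with rfl | rfl | ht
    · simp
    · simp
    · exact .inl (smul_mem_smul ht (mem_image_of_mem _ hx))
  have null : μ ({0} ∪ sphere (0 : E) 1) = 0 :=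
    measure_union_null (measure_singleton 0) (μ.addHaar_sphere 0 1)
  rw [conicalProbability_apply μ hs, μ.addHaar_closedBall_eq_addHaar_ball]
  congr 1
  refine le_antisymm (measure_mono (smul_subset_smul_right Ioo_subset_Icc_self)) ?_
  calc μ (Icc (0 : ℝ) 1 • ((↑) '' s : Set E))
      ≤ μ (Ioo (0 : ℝ) 1 • ((↑) '' s : Set E)) + μ ({0} ∪ sphere 0 1) :=
        (measure_mono subset_union).trans (measure_union_le _ _)
    _ = μ (Ioo (0 : ℝ) 1 • ((↑) '' s : Set E)) := by rw [null, add_zero]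

lemma conicalProbability_mul_le {s t : Set (sphere (0 : E) 1)} {r : ℝ} (hs : MeasurableSet s)
    (ht : MeasurableSet t) (hr : 1 / 2 ≤ r)
    (h : ∀ x ∈ s, ∀ y ∈ t, ‖midpoint ℝ (x : E) y‖ ≤ r) :
    conicalProbability μ s * conicalProbability μ t ≤
      ENNReal.ofReal (r ^ Module.finrank ℝ E) ^ 2 := by
  have midpoint_mem : ∀ x ∈ Ioo (0 : ℝ) 1 • ((↑) '' s : Set E),
      ∀ y ∈ Ioo (0 : ℝ) 1 • ((↑) '' t : Set E), midpoint ℝ x y ∈ closedBall (0 : E) r := by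
    rintro _ ⟨a, ha, _, ⟨x, hx, rfl⟩, rfl⟩ _ ⟨b, hb, _, ⟨y, hy, rfl⟩, rfl⟩
    exact mem_closedBall_zero_iff.2 <| norm_midpoint_smul_smul_le (norm_eq_of_mem_sphere x).le
      (norm_eq_of_mem_sphere y).le (h x hx y hy) hr (Ioo_subset_Icc_self ha)
      (Ioo_subset_Icc_self hb)
  have brunnMinkowski := measure_mul_measure_le_sq_of_midpoint_mem (prekopaLeindler_addHaar μ)
    (measurableSet_Ioo_smul_image_val hs ⟨1, mem_Ioi.2 one_pos⟩)
    (measurableSet_Ioo_smul_image_val ht ⟨1, mem_Ioi.2 one_pos⟩)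
    measurableSet_closedBall midpoint_mem
  rw [μ.addHaar_closedBall 0 (by linarith)] at brunnMinkowski
  have ball_ne_zero : μ (ball (0 : E) 1) ≠ 0 := (measure_ball_pos μ 0 one_pos).ne'
  calc conicalProbability μ s * conicalProbability μ t
      = μ (Ioo (0 : ℝ) 1 • ((↑) '' s : Set E)) * μ (Ioo (0 : ℝ) 1 • ((↑) '' t : Set E)) /
          μ (ball 0 1) ^ 2 := by
        rw [conicalProbability_apply μ hs, conicalProbability_apply μ ht, sq,
          ENNReal.mul_div_mul_comm (.inl ball_ne_zero) (.inl measure_ball_lt_top.ne)]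
    _ ≤ (ENNReal.ofReal (r ^ Module.finrank ℝ E) * μ (ball 0 1)) ^ 2 / μ (ball 0 1) ^ 2 := by
        gcongr
    _ = ENNReal.ofReal (r ^ Module.finrank ℝ E) ^ 2 := by
        rw [mul_pow, ENNReal.mul_div_cancel_right (by simp [ball_ne_zero])
          (by simp [measure_ball_lt_top.ne])]

lemma conicalProbability_real_le_exp {s t : Set (sphere (0 : E) 1)} {D : ℝ}
    (hd : 2 ≤ Module.finrank ℝ E) (hs_meas : MeasurableSet s) (ht_meas : MeasurableSet t)
    (hs : 1 / 2 ≤ (conicalProbability μ).real s)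
    (hts : (conicalProbability μ).real t ≤ (conicalProbability μ).real s)
    (h : ∀ x ∈ s, ∀ y ∈ t, ‖midpoint ℝ (x : E) y‖ ≤ 1 - D) :
    (conicalProbability μ).real t ≤ Real.exp (-D * Module.finrank ℝ E) := by
  rcases t.eq_empty_or_nonempty with rfl | ⟨y, hy⟩
  · rw [measureReal_empty]
    positivity
  obtain ⟨x, hx⟩ : s.Nonempty := by
    rw [nonempty_iff_ne_empty]
    rintro rfl
    norm_num at hs
  have hD : D ≤ 1 := sub_nonneg.1 ((norm_nonneg _).trans (h x hx y hy))
  refine le_exp_neg_mul_of_mul_le hd hs measureReal_nonneg hts hD ?_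
  rw [← ENNReal.ofReal_le_ofReal_iff (by positivity), ENNReal.ofReal_mul measureReal_nonneg,
    ENNReal.ofReal_pow (by positivity), ofReal_measureReal, ofReal_measureReal]
  exact conicalProbability_mul_le μ hs_meas ht_meas (le_max_right _ _)
    fun x hx y hy => (h x hx y hy).trans (le_max_left _ _)

end ConicalProbability

section Coordinates

universe u

lemma exists_linearEquiv_apply_eq_norm {V : Type u} [AddCommGroup V] [Module ℝ V]
    (p : Seminorm ℝ V) (hp : ∀ x, p x = 0 → x = 0) :
    ∃ (E : Type u) (_ : NormedAddCommGroup E) (_ : NormedSpace ℝ E) (e : E ≃ₗ[ℝ] V),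
      ∀ x, p (e x) = ‖x‖ := by
  let : Norm V := ⟨p⟩
  have core : NormedSpace.Core ℝ V :=
    { norm_nonneg := apply_nonneg p
      norm_smul := map_smul_eq_mul p
      norm_triangle := map_add_le_add p
      norm_eq_zero_iff := fun x => ⟨hp x, fun h => h ▸ map_zero p⟩ }
  let : NormedAddCommGroup V := .ofCore core
  exact ⟨V, inferInstance, .ofCore core, .refl ℝ V, fun _ => rfl⟩

lemma exists_continuousLinearEquiv_apply_eq_norm {V : Type u} [AddCommGroup V] [Module ℝ V]
    [FiniteDimensional ℝ V] [TopologicalSpace V] [IsTopologicalAddGroup V] [ContinuousSMul ℝ V]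
    [T2Space V] (p : Seminorm ℝ V) (hp : ∀ x, p x = 0 → x = 0) :
    ∃ (E : Type u) (_ : NormedAddCommGroup E) (_ : NormedSpace ℝ E) (e : E ≃L[ℝ] V),
      ∀ x, p (e x) = ‖x‖ := by
  obtain ⟨E, _, _, e, he⟩ := exists_linearEquiv_apply_eq_norm p hp
  have : FiniteDimensional ℝ E := e.symm.finiteDimensional
  exact ⟨E, inferInstance, inferInstance, e.toContinuousLinearEquiv, he⟩

variable {n : ℕ} {N : (Fin (n + 1) → ℝ) → ℝ} {E : Type*} [NormedAddCommGroup E] [NormedSpace ℝ E]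
  {e : E ≃L[ℝ] (Fin (n + 1) → ℝ)}

lemma conicalMeasure_mono {A B : Set (Fin (n + 1) → ℝ)} (h : A ⊆ B) :
    conicalMeasure N A ≤ conicalMeasure N B := by
  unfold conicalMeasure
  gcongr
  exact fun _ ⟨a, ha, t, ht⟩ => ⟨a, h ha, t, ht⟩

lemma coneOf_image (e : E ≃L[ℝ] (Fin (n + 1) → ℝ)) (s : Set E) :
    coneOf (e '' s) = e '' (Icc (0 : ℝ) 1 • s) := by
  ext p
  constructor
  · rintro ⟨_, ⟨x, hx, rfl⟩, t, ht₀, ht₁, rfl⟩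
    exact ⟨t • x, smul_mem_smul ⟨ht₀, ht₁⟩ hx, map_smul e t x⟩
  · rintro ⟨_, ⟨t, ⟨ht₀, ht₁⟩, x, hx, rfl⟩, rfl⟩
    exact ⟨e x, mem_image_of_mem e hx, t, ht₀, ht₁, map_smul e t x⟩

lemma image_cthickening_subset_sphNbhd (he : ∀ x, N (e x) = ‖x‖) {s : Set (sphere (0 : E) 1)}
    {ε : ℝ} (hε : 0 ≤ ε) :
    e '' ((↑) '' cthickening ε s) ⊆ sphNbhd N (e '' ((↑) '' s)) ε := by
  rintro _ ⟨_, ⟨x, hx, rfl⟩, rfl⟩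
  have infDist_le : infDist x s ≤ ε := ENNReal.toReal_le_of_le_ofReal hε hx
  refine ⟨(he x).trans (norm_eq_of_mem_sphere x), ?_⟩
  rw [infDist_eq_iInf] at infDist_le
  simpa [image_image, sInf_image', ← map_sub, he, dist_eq_norm, Subtype.dist_eq] using infDist_le

variable [MeasurableSpace E] [BorelSpace E]

lemma map_symm_volume_apply (e : E ≃L[ℝ] (Fin (n + 1) → ℝ)) (s : Set E) :
    (volume.map e.symm) s = volume (e '' s) := by
  rw [e.image_eq_preimage_symm]
  exact e.symm.toHomeomorph.toMeasurableEquiv.map_apply s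

lemma conicalMeasure_image [FiniteDimensional ℝ E] [Nontrivial E] (he : ∀ x, N (e x) = ‖x‖)
    {s : Set (sphere (0 : E) 1)} (hs : MeasurableSet s) :
    conicalMeasure N (e '' ((↑) '' s)) = conicalProbability (volume.map e.symm) s := by
  have ball_eq : {x | N x ≤ 1} = e '' closedBall 0 1 := by
    ext x
    simp [e.image_eq_preimage_symm, ← he]
  rw [conicalProbability_apply_eq_Icc _ hs, map_symm_volume_apply, map_symm_volume_apply,
    ← coneOf_image, ← ball_eq, conicalMeasure]

end Coordinates

theorem gromov_milman_isoperimetric_inequality_general {E : Type*} [NormedAddCommGroup E]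
    [NormedSpace ℝ E] [FiniteDimensional ℝ E] [MeasurableSpace E] [BorelSpace E] (μ : Measure E)
    [μ.IsAddHaarMeasure] {ε D : ℝ} (hd : 2 ≤ Module.finrank ℝ E)
    (hmid : ∀ x y : E, ‖x‖ = 1 → ‖y‖ = 1 → ε < ‖x - y‖ → ‖midpoint ℝ x y‖ ≤ 1 - D)
    {A : Set (sphere (0 : E) 1)} (hA : 1 / 2 ≤ conicalProbability μ A) :
    ENNReal.ofReal (1 - Real.exp (-D * Module.finrank ℝ E)) ≤
      conicalProbability μ (cthickening ε A) := by
  have : Nontrivial E := Module.nontrivial_of_finrank_pos (R := ℝ) (by omega)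
  set P := conicalProbability μ
  set B := (cthickening ε A)ᶜ with hB
  have hB_meas : MeasurableSet B := isClosed_cthickening.measurableSet.compl
  have hA_real : 1 / 2 ≤ P.real (closure A) := by
    simpa [measureReal_def] using
      ENNReal.toReal_mono (measure_ne_top _ _) (hA.trans (measure_mono subset_closure))
  have hB_real : P.real B = 1 - P.real (cthickening ε A) :=
    probReal_compl_eq_one_sub isClosed_cthickening.measurableSet
  have closure_le : P.real (closure A) ≤ P.real (cthickening ε A) :=
    measureReal_mono (closure_subset_cthickening ε A)
  have midpoint_le : ∀ x ∈ closure A, ∀ y ∈ B, ‖midpoint ℝ (x : E) y‖ ≤ 1 - D := by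
    intro x hx y hy
    refine hmid x y (norm_eq_of_mem_sphere x) (norm_eq_of_mem_sphere y) ?_
    contrapose! hy
    rw [hB, notMem_compl_iff, ← cthickening_closure]
    exact mem_cthickening_of_dist_le y x ε _ hx (by rwa [dist_comm, Subtype.dist_eq, dist_eq_norm])
  have hB_le : P.real B ≤ Real.exp (-D * Module.finrank ℝ E) :=
    conicalProbability_real_le_exp μ hd isClosed_closure.measurableSet hB_meas hA_real
      (by linarith) midpoint_le
  refine ENNReal.ofReal_le_of_le_toReal ?_
  change _ ≤ P.real (cthickening ε A)
  linarith

lemma one_sub_exp_le_conicalMeasure_sphNbhd {n : ℕ} (hn : n ≠ 0)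
    (p : Seminorm ℝ (Fin (n + 1) → ℝ)) (hp : ∀ x, p x = 0 → x = 0) {ε D : ℝ} (hε : 0 ≤ ε)
    (hmid : ∀ x y, p x = 1 → p y = 1 → ε < p (x - y) → p (midpoint ℝ x y) ≤ 1 - D)
    {A : Set (Fin (n + 1) → ℝ)} (hA_meas : MeasurableSet A) (hA_sub : A ⊆ unitSphere p)
    (hA : 1 / 2 ≤ conicalMeasure p A) :
    ENNReal.ofReal (1 - Real.exp (-D * (n + 1))) ≤ conicalMeasure p (sphNbhd p A ε) := by
  obtain ⟨E, _, _, e, he⟩ := exists_continuousLinearEquiv_apply_eq_norm p hp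
  have : FiniteDimensional ℝ E := e.symm.toLinearEquiv.finiteDimensional
  borelize E
  have finrank_eq : Module.finrank ℝ E = n + 1 := by simp [e.toLinearEquiv.finrank_eq]
  have : Nontrivial E := Module.nontrivial_of_finrank_pos (R := ℝ) (by omega)
  let s : Set (sphere (0 : E) 1) := (↑) ⁻¹' (e ⁻¹' A)
  have hs_meas : MeasurableSet s := measurable_subtype_coe (e.continuous.measurable hA_meas)
  have image_s : e '' ((↑) '' s) = A := by
    rw [Subtype.image_preimage_coe, image_inter_preimage, inter_eq_right]
    intro x hx
    have hx_norm : p x = 1 := hA_sub hx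
    exact ⟨e.symm x, by simpa [← he] using hx_norm, e.apply_symm_apply x⟩
  have hs : 1 / 2 ≤ conicalProbability (volume.map e.symm) s := by
    rwa [← conicalMeasure_image he hs_meas, image_s]
  have hmid_E : ∀ x y : E, ‖x‖ = 1 → ‖y‖ = 1 → ε < ‖x - y‖ → ‖midpoint ℝ x y‖ ≤ 1 - D := by
    intro x y hx hy hxy
    simpa [← he, midpoint_eq_smul_add] using
      hmid (e x) (e y) (by rwa [he]) (by rwa [he]) (by rwa [← map_sub, he])
  calc ENNReal.ofReal (1 - Real.exp (-D * (n + 1)))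
      = ENNReal.ofReal (1 - Real.exp (-D * Module.finrank ℝ E)) := by simp [finrank_eq]
    _ ≤ conicalProbability (volume.map e.symm) (cthickening ε s) :=
      gromov_milman_isoperimetric_inequality_general _ (by omega) hmid_E hs
    _ = conicalMeasure p (e '' ((↑) '' cthickening ε s)) :=
      (conicalMeasure_image he isClosed_cthickening.measurableSet).symm
    _ ≤ conicalMeasure p (sphNbhd p A ε) :=
      conicalMeasure_mono ((image_cthickening_subset_sphNbhd he hε).trans_eq (by rw [image_s]))

lemma thetaGM_nonneg {n : ℕ} (hn : n ≠ 0) : 0 ≤ thetaGM n := by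
  -- For `n = 1` the exponent is `1 / 0 = 0`, so `thetaGM 1 = 0`.
  have : (1 : ℝ) ≤ n := by exact_mod_cast Nat.one_le_iff_ne_zero.2 hn
  exact sub_nonneg.2 (Real.rpow_le_one (by norm_num) (by norm_num)
    (one_div_nonneg.2 (sub_nonneg.2 this)))

/-- **Gromov–Milman isoperimetric inequality** for the unit sphere of a uniformly convex
normed space `X = (ℝ^{n+1}, N)` with nondecreasing modulus of convexity `δ` (extended by
`δ(t) = 0` for `t < 0`): for every Borel set `A ⊆ S(X)` with `μ(A) ≥ 1/2` and every
`ε > 0`, `μ(A + ε) ≥ 1 - exp(-a(ε)·n)` where `a(ε) = δ(ε/8 - θ_n)`. -/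
theorem gromov_milman_isoperimetric_inequality
    (n : ℕ)
    (N : (Fin (n + 1) → ℝ) → ℝ)
    (hN0 : ∀ x, N x = 0 ↔ x = 0)
    (hNsmul : ∀ (a : ℝ) (x), N (a • x) = |a| * N x)
    (hNadd : ∀ x y, N (x + y) ≤ N x + N y)
    (δ : ℝ → ℝ)
    (hδmono : Monotone δ)
    (hδnonneg : ∀ t, 0 ≤ δ t)
    (hδneg : ∀ t : ℝ, t < 0 → δ t = 0)
    (hδmod : ∀ ε : ℝ, 0 < ε → ∀ x y, N x = 1 → N y = 1 → ε ≤ N (x - y) →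
      N ((2 : ℝ)⁻¹ • (x + y)) ≤ 1 - δ ε)
    (A : Set (Fin (n + 1) → ℝ))
    (hAborel : MeasurableSet A)
    (hAsub : A ⊆ unitSphere N)
    (hAhalf : (1 / 2 : ENNReal) ≤ conicalMeasure N A) :
    ∀ ε : ℝ, 0 < ε →
      ENNReal.ofReal (1 - Real.exp (-(δ (ε / 8 - thetaGM n)) * n)) ≤
        conicalMeasure N (sphNbhd N A ε) := by
  intro ε hε
  rcases eq_or_ne n 0 with rfl | hn
  -- Here `thetaGM 0 = -1`, but the exponent vanishes.
  · simp
  set D := δ (ε / 8 - thetaGM n)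
  have hD : D ≤ δ ε := hδmono (by linarith [thetaGM_nonneg hn])
  calc ENNReal.ofReal (1 - Real.exp (-D * n))
      ≤ ENNReal.ofReal (1 - Real.exp (-δ ε * (n + 1))) := by
        gcongr ENNReal.ofReal (1 - Real.exp ?_)
        nlinarith [hδnonneg ε, n.cast_nonneg (α := ℝ)]
    _ ≤ conicalMeasure N (sphNbhd N A ε) :=
      one_sub_exp_le_conicalMeasure_sphNbhd hn (Seminorm.of N hNadd hNsmul) (fun x => (hN0 x).1)
        hε.le (fun x y hx hy hxy => by
          rw [midpoint_eq_smul_add, invOf_eq_inv]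
          exact hδmod ε hε x y hx hy hxy.le)
        hAborel hAsub hAhalf
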